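/- Let m and n be positive integers and let x be a complex number with e^{iπn(2x+m)} ≠ 1. Then the Mordell integral Φ(x, m/n) equals [ Σ_{k=1}^{n} e^{iπ(m/n)k² + 2kπix} − √(n/m)·e^{iπ(1/4 − (n/m)x²)}·Σ_{k=1}^{m} e^{−iπ(n/m)k² + 2kπi(n/m)x} ] / ( e^{iπn(2x+m)} − 1 ). -/

import Mathlib

open scoped Real
open MeasureTheory Set Complex Finset

/-- Integral along the straight line `t ↦ c + e^{iθ} t`, `t ∈ ℝ`. -/
noncomputable def lineInt (c θ : ℝ) (f : ℂ → ℂ) : ℂ :=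
  ∫ t : ℝ, f ((c : ℂ) + Complex.exp ((θ : ℂ) * Complex.I) * (t : ℂ)) *
    Complex.exp ((θ : ℂ) * Complex.I)

/-- The Mordell integral `Φ(x, τ)`, the path being the straight line of slope 1
crossing the real axis at `c ∈ (0, 1)`. -/
noncomputable def mordellPhi (x τ : ℂ) (c : ℝ) : ℂ :=
  lineInt c (π/4) (fun u =>
    Complex.exp ((π : ℂ) * Complex.I * τ * u ^ 2 + 2 * (π : ℂ) * Complex.I * x * u) /
      (Complex.exp (2 * (π : ℂ) * Complex.I * u) - 1))

/-!
The idea is Mordell's: `Φ(x, τ)` satisfies two functional equations, one in the direction `1` and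
one in the direction `τ`, and for rational `τ = m / n` the shifts `m · 1` and `n · τ` agree.

Multiplying the integrand by `e^{2πiu}` replaces `x` by `x + 1`, and the difference of the two
integrands is a pure Gaussian, so `Φ(x + 1, τ) - Φ(x, τ)` is an explicit Gaussian integral. Moving
the line of integration from `c` to `c + 1` replaces `x` by `x + τ`, up to the factor
`e^{iπτ + 2πix}`, and picks up the residue at the pole `u = 1`. That residue comes for free: for
`x = -1/2`, `τ = 1` the two shifts coincide and the first functional equation computes the jump,
while any other numerator, minus a multiple of this reference one, vanishes at `u = 1` and leaves a
holomorphic integrand in the strip.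

Iterating `m` and `n` times gives two linear relations between `Φ(x, m/n)` and `Φ(x + m, m/n)`.
-/

section LineIntegrals

open Filter Topology Interval

theorem integral_boundary_parallelogram_eq_zero {E : Type*} [NormedAddCommGroup E]
    [NormedSpace ℂ E] {f : ℂ → E} {v w : ℂ} {a₁ b₁ a₂ b₂ : ℝ}
    (hf : ∀ s ∈ [[a₁, b₁]], ∀ t ∈ [[a₂, b₂]], DifferentiableAt ℂ f (v * s + w * t)) :
    (v • ∫ s in a₁..b₁, f (v * s + w * a₂)) - (v • ∫ s in a₁..b₁, f (v * s + w * b₂)) +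
      (w • ∫ t in a₂..b₂, f (v * b₁ + w * t)) - (w • ∫ t in a₂..b₂, f (v * a₁ + w * t)) = 0 := by
  let e : ℝ × ℝ →L[ℝ] ℂ :=
    (ofRealCLM.comp (.fst ℝ ℝ ℝ)).smulRight v + (ofRealCLM.comp (.snd ℝ ℝ ℝ)).smulRight w
  have he (s t : ℝ) : e (s, t) = v * s + w * t := by simp [e, mul_comm]
  let F' (p : ℝ × ℝ) : ℝ × ℝ →L[ℝ] E := ((fderiv ℂ f (e p)).restrictScalars ℝ).comp e
  have hF (p : ℝ × ℝ) (hp : p ∈ [[a₁, b₁]] ×ˢ [[a₂, b₂]]) : HasFDerivAt (f ∘ e) (F' p) p := by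
    have hfp : DifferentiableAt ℂ f (e p) := he p.1 p.2 ▸ hf p.1 hp.1 p.2 hp.2
    exact (hfp.hasFDerivAt.restrictScalars ℝ).comp p e.hasFDerivAt
  have hFc : ContinuousOn (f ∘ e) ([[a₁, b₁]] ×ˢ [[a₂, b₂]]) :=
    fun p hp => (hF p hp).continuousAt.continuousWithinAt
  have hcurl (p : ℝ × ℝ) : (w • F' p) (1, 0) + (-(v • F' p)) (0, 1) = 0 := by
    simp [F', he, fderiv_eq_smul_deriv, smul_comm v w]
  have hsub : Ioo (min a₁ b₁) (max a₁ b₁) ×ˢ Ioo (min a₂ b₂) (max a₂ b₂) ⊆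
      [[a₁, b₁]] ×ˢ [[a₂, b₂]] := Set.prod_mono Ioo_subset_Icc_self Ioo_subset_Icc_self
  have key := integral2_divergence_prod_of_hasFDerivAt (w • (f ∘ e)) (-(v • (f ∘ e)))
    (fun p => w • F' p) (fun p => -(v • F' p)) a₁ a₂ b₁ b₂ (hFc.const_smul w)
    (hFc.const_smul v).neg (fun p hp => (hF p (hsub hp)).const_smul w)
    (fun p hp => ((hF p (hsub hp)).const_smul v).neg) (by simp only [hcurl, integrableOn_zero])
  simp only [hcurl, intervalIntegral.integral_zero, Pi.neg_apply, Pi.smul_apply,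
    Function.comp_apply, he, intervalIntegral.integral_neg, intervalIntegral.integral_smul] at key
  rw [key]
  abel

/-- Integrability of `f` along the straight line `t ↦ c + e^{iθ} t`, i.e. of the integrand
of `lineInt c θ f` up to the unimodular factor `e^{iθ}`. -/
def LineIntegrable (c θ : ℝ) (f : ℂ → ℂ) : Prop :=
  Integrable fun t : ℝ => f ((c : ℂ) + Complex.exp ((θ : ℂ) * Complex.I) * (t : ℂ))

/-- Decay of `f` at both ends of the strip swept out by the lines `t ↦ c + e^{iθ} t`, uniformly in
`c ∈ s`: the condition under which the ends do not contribute to a shift of the line. -/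
def TendstoZeroOnLines (s : Set ℝ) (θ : ℝ) (f : ℂ → ℂ) : Prop :=
  TendstoUniformlyOn (fun t c : ℝ => f ((c : ℂ) + Complex.exp ((θ : ℂ) * Complex.I) * (t : ℂ)))
    0 (cocompact ℝ) s

variable {c c₁ c₂ θ : ℝ} {f g : ℂ → ℂ} {s : Set ℝ}

theorem LineIntegrable.sub (hf : LineIntegrable c θ f) (hg : LineIntegrable c θ g) :
    LineIntegrable c θ (f - g) :=
  Integrable.sub hf hg

theorem LineIntegrable.const_mul (hf : LineIntegrable c θ f) (k : ℂ) :
    LineIntegrable c θ (fun u => k * f u) :=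
  Integrable.const_mul hf k

theorem lineInt_sub (hf : LineIntegrable c θ f) (hg : LineIntegrable c θ g) :
    lineInt c θ (f - g) = lineInt c θ f - lineInt c θ g := by
  simp only [lineInt, integral_mul_const, Pi.sub_apply, ← sub_mul]
  rw [integral_sub hf hg]

theorem lineInt_const_mul (k : ℂ) (f : ℂ → ℂ) :
    lineInt c θ (fun u => k * f u) = k * lineInt c θ f := by
  simp only [lineInt, mul_assoc, integral_const_mul]

theorem lineInt_congr
    (h : ∀ t : ℝ, f (c + Complex.exp (θ * I) * t) = g (c + Complex.exp (θ * I) * t)) :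
    lineInt c θ f = lineInt c θ g := by
  simp only [lineInt, h]

theorem lineInt_add_const (c a θ : ℝ) (f : ℂ → ℂ) :
    lineInt (c + a) θ f = lineInt c θ (fun u => f (u + a)) := by
  simp only [lineInt, ofReal_add, add_right_comm]

theorem TendstoZeroOnLines.sub (hf : TendstoZeroOnLines s θ f) (hg : TendstoZeroOnLines s θ g) :
    TendstoZeroOnLines s θ (f - g) := by
  simpa only [sub_zero] using! TendstoUniformlyOn.sub hf hg

theorem TendstoZeroOnLines.of_norm_le_mul {C : ℝ} (hg : TendstoZeroOnLines s θ g)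
    (h : ∀ᶠ t : ℝ in cocompact ℝ, ∀ c ∈ s, ‖f (c + Complex.exp (θ * I) * t)‖ ≤
      C * ‖g (c + Complex.exp (θ * I) * t)‖) :
    TendstoZeroOnLines s θ f := by
  rw [TendstoZeroOnLines, Metric.tendstoUniformlyOn_iff] at hg ⊢
  intro ε hε
  filter_upwards [hg (ε / (|C| + 1)) (by positivity), h] with t hgt hft c hc
  simp only [Pi.zero_apply, dist_zero_left] at hgt ⊢
  calc ‖f (c + Complex.exp (θ * I) * t)‖
      ≤ C * ‖g (c + Complex.exp (θ * I) * t)‖ := hft c hc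
    _ ≤ (|C| + 1) * ‖g (c + Complex.exp (θ * I) * t)‖ := by
        gcongr
        exact (le_abs_self C).trans (le_add_of_nonneg_right zero_le_one)
    _ < ε := by
        rw [mul_comm, ← lt_div_iff₀ (by positivity)]
        exact hgt c hc

theorem lineInt_eq_of_tendstoZeroOnLines
    (hd : ∀ c ∈ [[c₁, c₂]], ∀ t : ℝ, DifferentiableAt ℂ f (c + Complex.exp (θ * I) * t))
    (h₁ : LineIntegrable c₁ θ f) (h₂ : LineIntegrable c₂ θ f)
    (h₀ : TendstoZeroOnLines [[c₁, c₂]] θ f) :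
    lineInt c₁ θ f = lineInt c₂ θ f := by
  set ω := Complex.exp (θ * I)
  have hside {T : ℝ → ℝ} (hT : Tendsto T atTop (cocompact ℝ)) :
      Tendsto (fun x => ∫ c in c₁..c₂, f (c + ω * T x)) atTop (𝓝 0) := by
    have hcont (x : ℝ) : ContinuousOn (fun c : ℝ => f (c + ω * T x)) [[c₁, c₂]] := fun c hc =>
      ((hd c hc (T x)).continuousAt.comp (f := fun c : ℝ => (c + ω * T x : ℂ))
        (by fun_prop)).continuousWithinAt
    have hunif : TendstoUniformlyOn (fun x c : ℝ => f (c + ω * T x)) 0 atTop [[c₁, c₂]] :=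
      fun u hu => hT.eventually (h₀ u hu)
    simpa using hunif.tendsto_intervalIntegral_of_continuousOn (μ := volume) (.of_forall hcont)
  have hboundary (T : ℝ) : ((∫ c in c₁..c₂, f (c + ω * (-T : ℝ))) -
      (∫ c in c₁..c₂, f (c + ω * T))) + ω * (∫ t in -T..T, f (c₂ + ω * t)) -
        ω * (∫ t in -T..T, f (c₁ + ω * t)) = 0 := by
    simpa only [one_mul, one_smul, smul_eq_mul] using integral_boundary_parallelogram_eq_zero
      (E := ℂ) (v := 1) (w := ω) fun c hc t (_ : t ∈ [[-T, T]]) => by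
        simpa only [one_mul] using hd c hc t
  have htop : Tendsto (fun T : ℝ => T) atTop (cocompact ℝ) := atTop_le_cocompact
  have hbot : Tendsto (fun T : ℝ => -T) atTop (cocompact ℝ) :=
    tendsto_neg_atTop_atBot.mono_right atBot_le_cocompact
  have hline {c : ℝ} (hc : LineIntegrable c θ f) :
      Tendsto (fun T : ℝ => ω * ∫ t in -T..T, f (c + ω * t)) atTop
        (𝓝 (lineInt c θ f)) := by
    rw [lineInt, integral_mul_const, mul_comm]
    exact (intervalIntegral_tendsto_integral hc tendsto_neg_atTop_atBot tendsto_id).const_mul ω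
  have hlim := (((hside hbot).sub (hside htop)).add (hline h₂)).sub (hline h₁)
  simp only [hboundary, sub_zero, zero_add] at hlim
  exact (sub_eq_zero.mp (tendsto_nhds_unique hlim tendsto_const_nhds)).symm

end LineIntegrals

section ExpSubOne

open Filter Interval

/-- The denominator `e^{2πiu} - 1` of the Mordell integrand: `1`-periodic, with simple zeros exactly
at the integers. -/
noncomputable def expSubOne (u : ℂ) : ℂ :=
  Complex.exp (2 * π * I * u) - 1

variable {c θ : ℝ} {f g : ℂ → ℂ}

theorem differentiable_expSubOne : Differentiable ℂ expSubOne := by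
  unfold expSubOne
  fun_prop

theorem expSubOne_add_one (u : ℂ) : expSubOne (u + 1) = expSubOne u := by
  rw [expSubOne, mul_add, mul_one, Complex.exp_add, exp_two_pi_mul_I, mul_one, expSubOne]

theorem expSubOne_eq_zero_iff {u : ℂ} : expSubOne u = 0 ↔ ∃ k : ℤ, u = k := by
  simp only [expSubOne, sub_eq_zero, Complex.exp_eq_one_iff, mul_comm _ (2 * π * I),
    mul_right_inj' two_pi_I_ne_zero]

theorem expSubOne_one : expSubOne 1 = 0 :=
  expSubOne_eq_zero_iff.mpr ⟨1, Int.cast_one.symm⟩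

theorem deriv_expSubOne_one : deriv expSubOne 1 = 2 * π * I := by
  have h : HasDerivAt expSubOne (Complex.exp (2 * π * I * 1) * (2 * π * I * 1)) 1 :=
    ((hasDerivAt_id (1 : ℂ)).const_mul (2 * π * I)).cexp.sub_const 1
  rw [h.deriv, mul_one, exp_two_pi_mul_I, one_mul]

theorem im_add_exp_mul_I_mul (c θ t : ℝ) :
    (c + Complex.exp (θ * I) * t).im = Real.sin θ * t := by
  rw [add_im, ofReal_im, zero_add, im_mul_ofReal, exp_ofReal_mul_I_im]

theorem eq_zero_and_exists_int_of_expSubOne_line_eq_zero (hθ : Real.sin θ ≠ 0) {t : ℝ}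
    (h : expSubOne (c + Complex.exp (θ * I) * t) = 0) : t = 0 ∧ ∃ k : ℤ, c = k := by
  obtain ⟨k, hk⟩ := expSubOne_eq_zero_iff.mp h
  have ht : t = 0 := by
    simpa [im_add_exp_mul_I_mul, hθ] using congrArg im hk
  refine ⟨ht, k, ?_⟩
  simpa [ht] using congrArg re hk

theorem expSubOne_line_ne_zero (hθ : Real.sin θ ≠ 0) (hc : 0 < c) (hc' : c < 1) (t : ℝ) :
    expSubOne (c + Complex.exp (θ * I) * t) ≠ 0 := by
  intro h
  obtain ⟨-, k, rfl⟩ := eq_zero_and_exists_int_of_expSubOne_line_eq_zero hθ h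
  norm_cast at hc hc'
  omega

theorem expSubOne_line_add_one_ne_zero (hθ : Real.sin θ ≠ 0) (hc : 0 < c) (hc' : c < 1) (t : ℝ) :
    expSubOne ((c + 1 : ℝ) + Complex.exp (θ * I) * t) ≠ 0 := by
  rw [ofReal_add, ofReal_one, add_right_comm, expSubOne_add_one]
  exact expSubOne_line_ne_zero hθ hc hc' t

theorem line_eq_one_of_expSubOne_eq_zero (hθ : Real.sin θ ≠ 0) (hc : 0 < c) (hc' : c < 2) {t : ℝ}
    (h : expSubOne (c + Complex.exp (θ * I) * t) = 0) : c + Complex.exp (θ * I) * t = 1 := by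
  obtain ⟨rfl, k, rfl⟩ := eq_zero_and_exists_int_of_expSubOne_line_eq_zero hθ h
  have hk : k = 1 := by
    norm_cast at hc hc'
    omega
  simp [hk]

theorem one_half_le_abs_exp_sub_one {r : ℝ} (hr : 1 ≤ |r|) : 1 / 2 ≤ |Real.exp r - 1| := by
  rcases le_abs'.mp hr with h | h
  · have hexp : Real.exp r ≤ 1 / 2 := by
      have hmul : Real.exp r * Real.exp (-r) = 1 := by rw [← Real.exp_add]; simp
      nlinarith [Real.add_one_le_exp (-r), Real.exp_pos r]
    rw [abs_sub_comm]
    exact (by linarith : 1 / 2 ≤ 1 - Real.exp r).trans (le_abs_self _)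
  · exact (by linarith [Real.add_one_le_exp r] : 1 / 2 ≤ Real.exp r - 1).trans (le_abs_self _)

theorem eventually_one_half_le_norm_expSubOne (hθ : Real.sin θ ≠ 0) :
    ∀ᶠ t : ℝ in cocompact ℝ, ∀ c : ℝ, 1 / 2 ≤ ‖expSubOne (c + Complex.exp (θ * I) * t)‖ := by
  have hk : -(2 * π * Real.sin θ) ≠ 0 := by simp [Real.pi_ne_zero, hθ]
  have hlim : Tendsto (fun t : ℝ => |-(2 * π * Real.sin θ) * t|) (cocompact ℝ) atTop := by
    simp only [abs_mul]
    exact tendsto_norm_cocompact_atTop.const_mul_atTop (abs_pos.mpr hk)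
  filter_upwards [hlim.eventually_ge_atTop 1] with t ht c
  have hnorm : ‖Complex.exp (2 * π * I * (c + Complex.exp (θ * I) * t))‖ =
      Real.exp (-(2 * π * Real.sin θ) * t) := by
    rw [norm_exp, show (2 * π * I * (c + Complex.exp (θ * I) * t) : ℂ) =
      ((2 * π : ℝ) : ℂ) * ((c + Complex.exp (θ * I) * t) * I) by push_cast; ring,
      re_ofReal_mul, mul_I_re, im_add_exp_mul_I_mul]
    ring_nf
  calc 1 / 2 ≤ |Real.exp (-(2 * π * Real.sin θ) * t) - 1| := one_half_le_abs_exp_sub_one ht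
    _ ≤ ‖expSubOne (c + Complex.exp (θ * I) * t)‖ := by
      rw [← hnorm, ← norm_one (α := ℂ)]
      exact abs_norm_sub_norm_le _ _

theorem eventually_norm_div_expSubOne_le (hθ : Real.sin θ ≠ 0) (f : ℂ → ℂ) :
    ∀ᶠ t : ℝ in cocompact ℝ, ∀ c : ℝ, ‖(f / expSubOne) (c + Complex.exp (θ * I) * t)‖ ≤
      2 * ‖f (c + Complex.exp (θ * I) * t)‖ := by
  filter_upwards [eventually_one_half_le_norm_expSubOne hθ] with t ht c
  have h := ht c
  rw [Pi.div_apply, norm_div, div_le_iff₀ (by linarith)]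
  nlinarith [norm_nonneg (f (c + Complex.exp (θ * I) * t))]

theorem LineIntegrable.div_expSubOne (hθ : Real.sin θ ≠ 0) (hf : Continuous f)
    (hint : LineIntegrable c θ f)
    (hc : ∀ t : ℝ, expSubOne (c + Complex.exp (θ * I) * t) ≠ 0) :
    LineIntegrable c θ (f / expSubOne) := by
  have hcont : Continuous fun t : ℝ => (f / expSubOne) (c + Complex.exp (θ * I) * t) :=
    (hf.comp (by fun_prop)).div (differentiable_expSubOne.continuous.comp (by fun_prop)) hc
  refine hcont.locallyIntegrable.integrable_of_isBigO_cocompact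
    (.of_bound 2 ?_) (hint.integrableAtFilter _)
  filter_upwards [eventually_norm_div_expSubOne_le hθ f] with t ht
  exact ht c

theorem lineInt_sub_const_mul_div_expSubOne (hθ : Real.sin θ ≠ 0) (hf : Continuous f)
    (hg : Continuous g) (hf_int : LineIntegrable c θ f) (hg_int : LineIntegrable c θ g)
    (hc : ∀ t : ℝ, expSubOne (c + Complex.exp (θ * I) * t) ≠ 0) (k : ℂ) :
    lineInt c θ ((f - fun u => k * g u) / expSubOne) =
      lineInt c θ (f / expSubOne) - k * lineInt c θ (g / expSubOne) := by
  rw [← lineInt_const_mul, ← lineInt_sub (hf_int.div_expSubOne hθ hf hc)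
    ((hg_int.div_expSubOne hθ hg hc).const_mul k)]
  congr 1
  funext u
  simp only [Pi.div_apply, Pi.sub_apply, sub_div, mul_div_assoc]

theorem differentiable_dslope {E : Type*} [NormedAddCommGroup E] [NormedSpace ℂ E]
    [CompleteSpace E] {f : ℂ → E} (hf : Differentiable ℂ f) (a : ℂ) :
    Differentiable ℂ (dslope f a) := by
  rw [← differentiableOn_univ] at hf ⊢
  exact (differentiableOn_dslope univ_mem).mpr hf

theorem dslope_div_dslope_of_ne {𝕜 : Type*} [NontriviallyNormedField 𝕜] {f g : 𝕜 → 𝕜} {a z : 𝕜}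
    (hf : f a = 0) (hg : g a = 0) (hz : z ≠ a) :
    dslope f a z / dslope g a z = f z / g z := by
  rw [dslope_of_ne _ hz, dslope_of_ne _ hz, slope_def_field, slope_def_field, hf, hg, sub_zero,
    sub_zero, div_div_div_cancel_right₀ (sub_ne_zero.mpr hz)]

theorem dslope_expSubOne_one_ne_zero {u : ℂ} (hu : expSubOne u = 0 → u = 1) :
    dslope expSubOne 1 u ≠ 0 := by
  rcases eq_or_ne u 1 with rfl | hne
  · rw [dslope_same, deriv_expSubOne_one]
    exact two_pi_I_ne_zero
  · rw [dslope_of_ne _ hne, slope_def_field, expSubOne_one, sub_zero]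
    exact div_ne_zero (mt hu hne) (sub_ne_zero.mpr hne)

theorem lineInt_add_one_div_expSubOne_of_eq_zero (hθ : Real.sin θ ≠ 0) (hc : 0 < c) (hc' : c < 1)
    (hf : Differentiable ℂ f) (hf₁ : f 1 = 0) (hint : LineIntegrable c θ f)
    (hint' : LineIntegrable (c + 1) θ f) (h₀ : TendstoZeroOnLines [[c, c + 1]] θ f) :
    lineInt (c + 1) θ (f / expSubOne) = lineInt c θ (f / expSubOne) := by
  set ω := Complex.exp (θ * I)
  let F : ℂ → ℂ := fun u => dslope f 1 u / dslope expSubOne 1 u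
  have hF {u : ℂ} (hu : u ≠ 1) : F u = (f / expSubOne) u :=
    dslope_div_dslope_of_ne hf₁ expSubOne_one hu
  have hc_line (t : ℝ) : expSubOne (c + ω * t) ≠ 0 := expSubOne_line_ne_zero hθ hc hc' t
  have hc'_line (t : ℝ) : expSubOne ((c + 1 : ℝ) + ω * t) ≠ 0 :=
    expSubOne_line_add_one_ne_zero hθ hc hc' t
  have hF_line {c₀ : ℝ} (h : ∀ t : ℝ, expSubOne (c₀ + ω * t) ≠ 0) (t : ℝ) :
      (f / expSubOne) (c₀ + ω * t) = F (c₀ + ω * t) :=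
    (hF fun h₁ => h t (by rw [h₁, expSubOne_one])).symm
  have hF_int {c₀ : ℝ} (h : ∀ t : ℝ, expSubOne (c₀ + ω * t) ≠ 0) (hi : LineIntegrable c₀ θ f) :
      LineIntegrable c₀ θ F :=
    (hi.div_expSubOne hθ hf.continuous h).congr (.of_forall (hF_line h))
  rw [lineInt_congr (hF_line hc_line), lineInt_congr (hF_line hc'_line)]
  refine (lineInt_eq_of_tendstoZeroOnLines (fun s hs t => ?_) (hF_int hc_line hint)
    (hF_int hc'_line hint') ?_).symm
  · refine (differentiable_dslope hf 1 _).div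
      (differentiable_dslope differentiable_expSubOne 1 _) ?_
    rw [Set.uIcc_of_le (by linarith)] at hs
    exact dslope_expSubOne_one_ne_zero
      (line_eq_one_of_expSubOne_eq_zero hθ (by linarith [hs.1]) (by linarith [hs.2]))
  · refine h₀.of_norm_le_mul (C := 2) ?_
    filter_upwards [eventually_norm_div_expSubOne_le hθ f,
      eventually_one_half_le_norm_expSubOne hθ] with t hle hge s _
    have hne : s + ω * t ≠ 1 := by
      intro h
      have := hge s
      rw [h, expSubOne_one, norm_zero] at this
      norm_num at this
    exact hF hne ▸ hle s

end ExpSubOne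

section Gaussian

open Filter Topology Interval

theorem norm_exp_add_mul_le {c c₁ c₂ : ℝ} (hc : c ∈ [[c₁, c₂]]) (p q : ℂ) :
    ‖Complex.exp (p + c * q)‖ ≤ ‖Complex.exp (p + c₁ * q)‖ + ‖Complex.exp (p + c₂ * q)‖ := by
  have hlin : c * q.re ≤ c₁ * q.re ∨ c * q.re ≤ c₂ * q.re := by
    rcases le_total 0 q.re with hq | hq <;> rcases mem_uIcc.mp hc with ⟨h₁, h₂⟩ | ⟨h₁, h₂⟩
    · exact .inr (mul_le_mul_of_nonneg_right h₂ hq)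
    · exact .inl (mul_le_mul_of_nonneg_right h₂ hq)
    · exact .inl (mul_le_mul_of_nonpos_right h₁ hq)
    · exact .inr (mul_le_mul_of_nonpos_right h₁ hq)
  simp only [norm_exp, add_re, re_ofReal_mul]
  rcases hlin with h | h
  · exact (Real.exp_le_exp.mpr (by gcongr)).trans (le_add_of_nonneg_right (Real.exp_nonneg _))
  · exact (Real.exp_le_exp.mpr (by gcongr)).trans (le_add_of_nonneg_left (Real.exp_nonneg _))

theorem tendsto_norm_cexp_quadratic {a : ℂ} (ha : a.re < 0) (b : ℂ) :
    Tendsto (fun t : ℝ => ‖Complex.exp (a * t ^ 2 + b * t)‖) (cocompact ℝ) (𝓝 0) := by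
  have h := cexp_neg_quadratic_isLittleO_abs_rpow_cocompact ha b 0
  simp only [Real.rpow_zero] at h
  exact ((Asymptotics.isLittleO_one_iff ℝ).mp h).norm.trans (by rw [norm_zero])

theorem tendstoUniformlyOn_cexp_quadratic {a : ℂ} (ha : a.re < 0) (b₀ b₁ : ℂ) {d : ℝ → ℂ}
    (hd : Continuous d) (c₁ c₂ : ℝ) :
    TendstoUniformlyOn (fun t c : ℝ => Complex.exp (a * t ^ 2 + (b₀ + c * b₁) * t + d c)) 0
      (cocompact ℝ) [[c₁, c₂]] := by
  obtain ⟨M, hM⟩ := isCompact_uIcc.exists_bound_of_continuousOn (s := [[c₁, c₂]])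
    (f := fun c => Complex.exp (d c)) (by fun_prop)
  have hlim := ((tendsto_norm_cexp_quadratic ha (b₀ + c₁ * b₁)).add
    (tendsto_norm_cexp_quadratic ha (b₀ + c₂ * b₁))).mul_const M
  simp only [add_zero, zero_mul] at hlim
  rw [Metric.tendstoUniformlyOn_iff]
  intro ε hε
  filter_upwards [hlim.eventually_lt_const hε] with t ht c hc
  have hsplit (c : ℝ) : a * t ^ 2 + (b₀ + c * b₁) * t = a * t ^ 2 + b₀ * t + c * (b₁ * t) := by
    ring
  rw [Pi.zero_apply, dist_zero_left, Complex.exp_add, norm_mul]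
  refine lt_of_le_of_lt ?_ ht
  gcongr
  · simpa only [hsplit] using norm_exp_add_mul_le hc (a * t ^ 2 + b₀ * t) (b₁ * t)
  · exact hM c hc

/-- The numerator `e^{iπτu² + 2πixu}` of the Mordell integrand. -/
noncomputable def mordellGaussian (x τ u : ℂ) : ℂ :=
  Complex.exp (π * I * τ * u ^ 2 + 2 * π * I * x * u)

variable {x τ : ℂ}

theorem differentiable_mordellGaussian (x τ : ℂ) : Differentiable ℂ (mordellGaussian x τ) := by
  unfold mordellGaussian
  fun_prop

theorem mordellGaussian_add_one_left (x τ u : ℂ) :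
    mordellGaussian (x + 1) τ u = mordellGaussian x τ u * (expSubOne u + 1) := by
  rw [expSubOne, sub_add_cancel, mordellGaussian, mordellGaussian, ← Complex.exp_add]
  ring_nf

theorem mordellGaussian_add (x τ u v : ℂ) :
    mordellGaussian x τ (u + v) = mordellGaussian x τ v * mordellGaussian (x + v * τ) τ u := by
  simp only [mordellGaussian, ← Complex.exp_add]
  ring_nf

theorem exp_pi_div_four_mul_I_sq : Complex.exp ((π / 4 : ℝ) * I) ^ 2 = I := by
  rw [← Complex.exp_nat_mul]
  refine (congrArg Complex.exp ?_).trans exp_pi_div_two_mul_I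
  push_cast
  ring

theorem mordellGaussian_line (x τ : ℂ) (c t : ℝ) :
    mordellGaussian x τ (c + Complex.exp ((π / 4 : ℝ) * I) * t) =
      Complex.exp (-(π * τ) * t ^ 2 +
        (2 * π * I * Complex.exp ((π / 4 : ℝ) * I) * x +
          c * (2 * π * I * Complex.exp ((π / 4 : ℝ) * I) * τ)) * t +
        (π * I * τ * c ^ 2 + 2 * π * I * x * c)) := by
  rw [mordellGaussian]
  congr 1
  linear_combination π * I * τ * t ^ 2 * exp_pi_div_four_mul_I_sq + π * τ * t ^ 2 * I_sq

theorem neg_pi_mul_re_neg (hτ : 0 < τ.re) : (-(π * τ)).re < 0 := by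
  rw [neg_re, re_ofReal_mul]
  exact neg_neg_of_pos (mul_pos Real.pi_pos hτ)

theorem lineIntegrable_mordellGaussian (hτ : 0 < τ.re) (x : ℂ) (c : ℝ) :
    LineIntegrable c (π / 4) (mordellGaussian x τ) := by
  simp only [LineIntegrable, mordellGaussian_line]
  exact integrable_cexp_quadratic' (neg_pi_mul_re_neg hτ) _ _

theorem tendstoZeroOnLines_mordellGaussian (hτ : 0 < τ.re) (x : ℂ) (c₁ c₂ : ℝ) :
    TendstoZeroOnLines [[c₁, c₂]] (π / 4) (mordellGaussian x τ) := by
  simp only [TendstoZeroOnLines, mordellGaussian_line]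
  exact tendstoUniformlyOn_cexp_quadratic (neg_pi_mul_re_neg hτ) _ _ (by fun_prop) _ _

theorem lineInt_mordellGaussian (hτ : 0 < τ.re) (x : ℂ) (c : ℝ) :
    lineInt c (π / 4) (mordellGaussian x τ) =
      (1 / τ) ^ (1 / 2 : ℂ) * Complex.exp (π * I * (1 / 4 - x ^ 2 / τ)) := by
  have hτ₀ : τ ≠ 0 := by
    rintro rfl
    exact hτ.ne' zero_re
  have hπ : (π : ℂ) ≠ 0 := ofReal_ne_zero.mpr Real.pi_ne_zero
  simp only [lineInt, mordellGaussian_line, integral_mul_const]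
  rw [integral_cexp_quadratic (neg_pi_mul_re_neg hτ), neg_neg, div_mul_cancel_left₀ hπ, ← one_div,
    mul_assoc, ← Complex.exp_add]
  congr 2
  have hω := exp_pi_div_four_mul_I_sq
  set ω := Complex.exp ((π / 4 : ℝ) * I)
  push_cast
  field_simp
  linear_combination 4 * I * (x + τ * c) ^ 2 * hω + 4 * (x + τ * c) ^ 2 * I_sq

end Gaussian

section FunctionalEquations

open Interval

variable {x τ : ℂ} {c : ℝ}

theorem sin_pi_div_four_ne_zero : Real.sin (π / 4) ≠ 0 := by
  rw [Real.sin_pi_div_four]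
  positivity

theorem mordellPhi_eq_lineInt (x τ : ℂ) (c : ℝ) :
    mordellPhi x τ c = lineInt c (π / 4) (mordellGaussian x τ / expSubOne) :=
  rfl

theorem lineIntegrable_mordellGaussian_div (hτ : 0 < τ.re) (hc : 0 < c) (hc' : c < 1) (x : ℂ) :
    LineIntegrable c (π / 4) (mordellGaussian x τ / expSubOne) :=
  (lineIntegrable_mordellGaussian hτ x c).div_expSubOne sin_pi_div_four_ne_zero
    (differentiable_mordellGaussian x τ).continuous
    (expSubOne_line_ne_zero sin_pi_div_four_ne_zero hc hc')

theorem mordellPhi_add_one (hτ : 0 < τ.re) (hc : 0 < c) (hc' : c < 1) (x : ℂ) :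
    mordellPhi (x + 1) τ c = mordellPhi x τ c +
      (1 / τ) ^ (1 / 2 : ℂ) * Complex.exp (π * I * (1 / 4 - x ^ 2 / τ)) := by
  rw [← lineInt_mordellGaussian hτ x c, ← sub_eq_iff_eq_add', mordellPhi_eq_lineInt,
    mordellPhi_eq_lineInt, ← lineInt_sub (lineIntegrable_mordellGaussian_div hτ hc hc' _)
      (lineIntegrable_mordellGaussian_div hτ hc hc' _)]
  refine lineInt_congr fun t => ?_
  have hne := expSubOne_line_ne_zero sin_pi_div_four_ne_zero hc hc' t
  simp only [Pi.sub_apply, Pi.div_apply, mordellGaussian_add_one_left]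
  field_simp
  ring

theorem lineInt_add_one_mordellGaussian_div (x τ : ℂ) (c : ℝ) :
    lineInt (c + 1) (π / 4) (mordellGaussian x τ / expSubOne) =
      mordellGaussian x τ 1 * mordellPhi (x + τ) τ c := by
  rw [lineInt_add_const, mordellPhi_eq_lineInt, ← lineInt_const_mul]
  refine lineInt_congr fun t => ?_
  simp only [Pi.div_apply, ofReal_one, mordellGaussian_add, one_mul, expSubOne_add_one,
    mul_div_assoc]

theorem mordellGaussian_neg_half_one : mordellGaussian (-1 / 2) 1 1 = 1 := by
  have hexp : π * I * 1 * (1 : ℂ) ^ 2 + 2 * π * I * (-1 / 2) * 1 = 0 := by ring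
  rw [mordellGaussian, hexp, Complex.exp_zero]

theorem lineInt_add_one_mordellGaussian_neg_half_div (hc : 0 < c) (hc' : c < 1) :
    lineInt (c + 1) (π / 4) (mordellGaussian (-1 / 2) 1 / expSubOne) =
      lineInt c (π / 4) (mordellGaussian (-1 / 2) 1 / expSubOne) + 1 := by
  have h := mordellPhi_add_one (τ := 1) (by simp) hc hc' (-1 / 2)
  rw [lineInt_add_one_mordellGaussian_div, mordellGaussian_neg_half_one, one_mul, h,
    mordellPhi_eq_lineInt]
  norm_num

theorem lineInt_add_one_div_expSubOne {f : ℂ → ℂ} (hc : 0 < c) (hc' : c < 1)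
    (hf : Differentiable ℂ f) (hint : LineIntegrable c (π / 4) f)
    (hint' : LineIntegrable (c + 1) (π / 4) f) (h₀ : TendstoZeroOnLines [[c, c + 1]] (π / 4) f) :
    lineInt (c + 1) (π / 4) (f / expSubOne) = lineInt c (π / 4) (f / expSubOne) + f 1 := by
  have hτ : 0 < (1 : ℂ).re := by simp
  let g := mordellGaussian (-1 / 2) 1
  have hg : Differentiable ℂ g := differentiable_mordellGaussian _ _
  have hg_int (c₀ : ℝ) : LineIntegrable c₀ (π / 4) g := lineIntegrable_mordellGaussian hτ _ c₀
  -- Subtracting `f 1 * g` removes the pole at `1`, and the jump of `g` is known.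
  have hshift := lineInt_add_one_div_expSubOne_of_eq_zero sin_pi_div_four_ne_zero hc hc'
    (f := f - fun u => f 1 * g u) (hf.sub (hg.const_mul (f 1)))
    (by simp [g, mordellGaussian_neg_half_one]) (hint.sub ((hg_int c).const_mul (f 1)))
    (hint'.sub ((hg_int (c + 1)).const_mul (f 1)))
    (h₀.sub ((tendstoZeroOnLines_mordellGaussian hτ (-1 / 2) c (c + 1)).of_norm_le_mul
      (.of_forall fun _ _ _ => (norm_mul (f 1) _).le)))
  rw [lineInt_sub_const_mul_div_expSubOne sin_pi_div_four_ne_zero hf.continuous hg.continuous hint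
      (hg_int c) (expSubOne_line_ne_zero sin_pi_div_four_ne_zero hc hc'),
    lineInt_sub_const_mul_div_expSubOne sin_pi_div_four_ne_zero hf.continuous hg.continuous hint'
      (hg_int (c + 1)) (expSubOne_line_add_one_ne_zero sin_pi_div_four_ne_zero hc hc'),
    lineInt_add_one_mordellGaussian_neg_half_div hc hc'] at hshift
  linear_combination hshift

theorem mordellGaussian_one_mul_mordellPhi_add (hτ : 0 < τ.re) (hc : 0 < c) (hc' : c < 1) (x : ℂ) :
    mordellGaussian x τ 1 * mordellPhi (x + τ) τ c = mordellPhi x τ c + mordellGaussian x τ 1 := by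
  rw [← lineInt_add_one_mordellGaussian_div, mordellPhi_eq_lineInt]
  exact lineInt_add_one_div_expSubOne hc hc' (differentiable_mordellGaussian x τ)
    (lineIntegrable_mordellGaussian hτ x c) (lineIntegrable_mordellGaussian hτ x (c + 1))
    (tendstoZeroOnLines_mordellGaussian hτ x c (c + 1))

theorem mordellPhi_eq_mordellPhi_sub_natCast_add (hτ : 0 < τ.re) (hc : 0 < c) (hc' : c < 1) (x : ℂ)
    (k : ℕ) :
    mordellPhi x τ c = mordellPhi (x - k) τ c + (1 / τ) ^ (1 / 2 : ℂ) *
      ∑ j ∈ Finset.Icc 1 k, Complex.exp (π * I * (1 / 4 - (x - j) ^ 2 / τ)) := by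
  induction k with
  | zero => simp
  | succ k ih =>
    have h := mordellPhi_add_one hτ hc hc' (x - (k + 1 : ℕ))
    rw [show x - (k + 1 : ℕ) + 1 = x - k by push_cast; ring] at h
    rw [Finset.sum_Icc_succ_top (by omega), ih, h]
    ring

theorem mordellGaussian_natCast_mul_mordellPhi_add (hτ : 0 < τ.re) (hc : 0 < c) (hc' : c < 1)
    (x : ℂ) (k : ℕ) :
    mordellGaussian x τ k * mordellPhi (x + k * τ) τ c =
      mordellPhi x τ c + ∑ j ∈ Finset.Icc 1 k, mordellGaussian x τ j := by
  induction k with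
  | zero => simp [mordellGaussian]
  | succ k ih =>
    have h := mordellGaussian_one_mul_mordellPhi_add hτ hc hc' (x + k * τ)
    rw [show x + k * τ + τ = x + (1 + k) * τ by ring] at h
    rw [Finset.sum_Icc_succ_top (by omega), Nat.cast_succ, add_comm (k : ℂ) 1,
      mordellGaussian_add, ← add_assoc, ← ih]
    linear_combination mordellGaussian x τ k * h

end FunctionalEquations

section RationalParameter

variable {m n : ℕ}

theorem natCast_div_re_pos (hm : 0 < m) (hn : 0 < n) : 0 < ((m : ℂ) / n).re := by
  rw [← ofReal_natCast, ← ofReal_natCast, ← ofReal_div, ofReal_re]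
  positivity

theorem one_div_natCast_div_cpow_half (m n : ℕ) :
    (1 / ((m : ℂ) / n)) ^ (1 / 2 : ℂ) = (Real.sqrt ((n : ℝ) / m) : ℂ) := by
  rw [Real.sqrt_eq_rpow, ofReal_cpow (by positivity), one_div_div]
  push_cast
  rfl

theorem mordellGaussian_natCast_div_natCast (hn : 0 < n) (m : ℕ) (x : ℂ) :
    mordellGaussian x (m / n) n = Complex.exp (π * I * n * (2 * x + m)) := by
  have hn₀ : (n : ℂ) ≠ 0 := Nat.cast_ne_zero.mpr hn.ne'
  rw [mordellGaussian]
  congr 1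
  field_simp
  ring

theorem exp_mul_exp_sub_add_natCast_sub_sq (hm : 0 < m) (n k : ℕ) (x : ℂ) :
    Complex.exp (π * I * n * (2 * x + m)) *
        Complex.exp (π * I * (1 / 4 - (x + m - k) ^ 2 / (m / n))) =
      Complex.exp (π * I * (1 / 4 - (n / m) * x ^ 2)) *
        Complex.exp (-(π * I * (n / m) * k ^ 2) + 2 * k * π * I * (n / m) * x) := by
  have hm₀ : (m : ℂ) ≠ 0 := Nat.cast_ne_zero.mpr hm.ne'
  have hper : Complex.exp ((n * k : ℕ) * (2 * π * I)) = 1 := exp_nat_mul_two_pi_mul_I _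
  rw [← mul_one (Complex.exp (-_ + _)), ← hper, ← Complex.exp_add, ← Complex.exp_add,
    ← Complex.exp_add]
  congr 1
  push_cast
  field_simp
  ring

end RationalParameter

/-- Evaluation of the Mordell integral `Φ(x, m/n)` at a positive rational `τ = m/n`
in terms of exponential sums. -/
theorem mordellPhi_rat (m n : ℕ) (hm : 0 < m) (hn : 0 < n) (x : ℂ)
    (hx : Complex.exp ((π : ℂ) * Complex.I * n * (2 * x + m)) ≠ 1)
    (c : ℝ) (hc : 0 < c) (hc' : c < 1) :
    mordellPhi x ((m : ℂ) / (n : ℂ)) c =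
      ((∑ k ∈ Finset.Icc 1 n,
          Complex.exp ((π : ℂ) * Complex.I * ((m : ℂ) / n) * (k : ℂ) ^ 2 +
            2 * (k : ℂ) * (π : ℂ) * Complex.I * x)) -
        (Real.sqrt ((n : ℝ) / (m : ℝ)) : ℂ) *
          Complex.exp ((π : ℂ) * Complex.I * (1 / 4 - ((n : ℂ) / m) * x ^ 2)) *
          ∑ k ∈ Finset.Icc 1 m,
            Complex.exp (-((π : ℂ) * Complex.I * ((n : ℂ) / m) * (k : ℂ) ^ 2) +
              2 * (k : ℂ) * (π : ℂ) * Complex.I * ((n : ℂ) / m) * x)) /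
      (Complex.exp ((π : ℂ) * Complex.I * n * (2 * x + m)) - 1) := by
  have hτ := natCast_div_re_pos hm hn
  have hone := mordellPhi_eq_mordellPhi_sub_natCast_add hτ hc hc' (x + m) m
  have htau := mordellGaussian_natCast_mul_mordellPhi_add hτ hc hc' x n
  have hgauss (k : ℕ) : mordellGaussian x (m / n) k =
      Complex.exp (π * I * (m / n) * k ^ 2 + 2 * k * π * I * x) := by
    rw [mordellGaussian]
    ring_nf
  have hreflect := Finset.sum_congr rfl fun k (_ : k ∈ Finset.Icc 1 m) =>
    exp_mul_exp_sub_add_natCast_sub_sq hm n k x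
  rw [← Finset.mul_sum, ← Finset.mul_sum] at hreflect
  rw [mordellGaussian_natCast_div_natCast hn, mul_div_cancel₀ _ (Nat.cast_ne_zero.mpr hn.ne'),
    Finset.sum_congr rfl fun k _ => hgauss k] at htau
  rw [add_sub_cancel_right, one_div_natCast_div_cpow_half] at hone
  rw [eq_div_iff (sub_ne_zero.mpr hx)]
  linear_combination htau - Complex.exp (π * I * n * (2 * x + m)) * hone -
    (Real.sqrt (n / m) : ℂ) * hreflect
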